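/- Let G be a finitely generated group and let k ≥ 1 be a natural number. Then the set {H : Subgroup G | H.index = k} of subgroups of G of index k is finite. -/

import Mathlib

/-!
A subgroup `H` of `G` is the stabilizer of the trivial coset under the action of `G` on `G ⧸ H`.
Numbering the cosets by a set `α`, we recover `H` from a homomorphism `G →* Equiv.Perm α` and a
point of `α`. If `G` is finitely generated and `α` is finite, there are only finitely many such
pairs, because a homomorphism is determined by its values on the generators.
-/

theorem finite_monoidHom_of_fg (M N : Type*) [Monoid M] [Monoid.FG M] [MulOneClass N] [Finite N] :
    Finite (M →* N) := by
  obtain ⟨S, hS⟩ := Monoid.fg_def.1 ‹Monoid.FG M›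
  refine .of_injective (fun (f : M →* N) (s : S) ↦ f s) fun f g hfg ↦ ?_
  exact MonoidHom.eq_of_eqOn_denseM hS fun s hs ↦ congrFun hfg ⟨s, hs⟩

theorem comap_permCongrHom_stabilizer {α β : Type*} (e : α ≃ β) (a : α) :
    (MulAction.stabilizer (Equiv.Perm β) (e a)).comap e.permCongrHom.toMonoidHom =
      MulAction.stabilizer (Equiv.Perm α) a := by
  ext σ
  simp [MulAction.mem_stabilizer_iff, Equiv.permCongrHom]

theorem comap_toPermHom_stabilizer (G : Type*) {X : Type*} [Group G] [MulAction G X] (x : X) :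
    (MulAction.stabilizer (Equiv.Perm X) x).comap (MulAction.toPermHom G X) =
      MulAction.stabilizer G x :=
  rfl

section

variable {G : Type*} [Group G]

theorem exists_comap_stabilizer_eq_of_quotient_equiv {α : Type*} {H : Subgroup G} (e : G ⧸ H ≃ α) :
    ∃ (f : G →* Equiv.Perm α) (a : α),
      (MulAction.stabilizer (Equiv.Perm α) a).comap f = H := by
  refine ⟨e.permCongrHom.toMonoidHom.comp (MulAction.toPermHom G (G ⧸ H)), e (1 : G), ?_⟩
  rw [← Subgroup.comap_comap, comap_permCongrHom_stabilizer, comap_toPermHom_stabilizer,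
    MulAction.stabilizer_quotient]

theorem finite_setOf_nonempty_quotient_equiv [Group.FG G] (α : Type*) [Finite α] :
    {H : Subgroup G | Nonempty (G ⧸ H ≃ α)}.Finite := by
  have : Finite (G →* Equiv.Perm α) := finite_monoidHom_of_fg G (Equiv.Perm α)
  refine (Set.finite_range fun p : (G →* Equiv.Perm α) × α ↦
    (MulAction.stabilizer (Equiv.Perm α) p.2).comap p.1).subset ?_
  rintro H ⟨e⟩
  obtain ⟨f, a, hfa⟩ := exists_comap_stabilizer_eq_of_quotient_equiv e
  exact ⟨(f, a), hfa⟩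

end

/-- A finitely generated group has only finitely many subgroups of any given
finite index `k ≥ 1`. -/
theorem finitely_many_subgroups_of_index {G : Type*} [Group G] [Group.FG G]
    (k : ℕ) (hk : 1 ≤ k) :
    {H : Subgroup G | H.index = k}.Finite := by
  refine (finite_setOf_nonempty_quotient_equiv (Fin k)).subset fun H hH ↦ ?_
  have hcard : Nat.card (G ⧸ H) = k := hH
  have : Finite (G ⧸ H) := Nat.finite_of_card_ne_zero (by lia)
  exact ⟨Finite.equivFinOfCardEq hcard⟩
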